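/- Let d ≥ 1, let w₁,…,w_d be an orthonormal family of vectors in ℝ^d, let λ₁,…,λ_d be nonnegative real numbers, let ε ≥ 0, and let S ⊆ {1,…,d} with |S| = k, such that λ_i ≤ ε for every i ∉ S. Define M = Σ_{i=1}^d λ_i w_i w_iᵀ and M̃ = Σ_{i∈S} λ_i w_i w_iᵀ, let e ∈ ℝ^d be the vector of all ones, and define the vectors Φ = (1/2) M e + (1/2) diag(M) and Φ̃ = (1/2) M̃ e + (1/2) diag(M̃), where diag(A) ∈ ℝ^d denotes the vector of diagonal entries of A. Then ‖Φ − Φ̃‖₂ ≤ (d−k) ε √d, where ‖·‖₂ is the Euclidean norm on ℝ^d. -/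

import Mathlib

open Finset

/-!
The difference of the two vectors of Shapley values is the image of the discarded part `M - M̃`
under the linear map `A ↦ (A e + diag A) / 2`. By Cauchy–Schwarz on each row this map is bounded by
`√d` from the Frobenius norm to the Euclidean norm. The discarded part is a sum of `d - k` matrices
`λ_i wᵢ wᵢᵀ`, each of Frobenius norm at most `ε`, so the triangle inequality suffices.
-/

section FrobeniusNorm

open scoped Matrix.Norms.Frobenius

variable {ι m n 𝕜 : Type*} [Fintype m] [Fintype n] [RCLike 𝕜]

theorem frobenius_norm_sq_eq_sum_norm_row_sq (A : Matrix m n 𝕜) :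
    ‖A‖ ^ 2 = ∑ j, ‖WithLp.toLp 2 (A j)‖ ^ 2 :=
  PiLp.norm_sq_eq_of_L2 (fun _ => EuclideanSpace 𝕜 n) (WithLp.toLp 2 fun j => WithLp.toLp 2 (A j))

theorem frobenius_norm_vecMulVec_le (u : EuclideanSpace 𝕜 m) (v : EuclideanSpace 𝕜 n) :
    ‖Matrix.vecMulVec u.ofLp v.ofLp‖ ≤ ‖u‖ * ‖v‖ := by
  rw [Matrix.vecMulVec_eq Unit]
  refine (Matrix.frobenius_norm_mul _ _).trans_eq ?_
  rw [Matrix.frobenius_norm_replicateCol, Matrix.frobenius_norm_replicateRow]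

theorem frobenius_norm_sum_smul_vecMulVec_le (c : ι → 𝕜) (u : ι → EuclideanSpace 𝕜 m)
    (v : ι → EuclideanSpace 𝕜 n) (T : Finset ι) :
    ‖∑ i ∈ T, c i • Matrix.vecMulVec (u i).ofLp (v i).ofLp‖
      ≤ ∑ i ∈ T, ‖c i‖ * (‖u i‖ * ‖v i‖) := by
  refine norm_sum_le_of_le T fun i _ => ?_
  grw [norm_smul, frobenius_norm_vecMulVec_le]

end FrobeniusNorm

theorem norm_sum_apply_le_sqrt_card_mul_norm {n 𝕜 : Type*} [Fintype n] [RCLike 𝕜]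
    (v : EuclideanSpace 𝕜 n) : ‖∑ l, v l‖ ≤ √(Fintype.card n) * ‖v‖ := by
  rw [EuclideanSpace.norm_eq, ← Real.sqrt_mul (Nat.cast_nonneg _)]
  exact (norm_sum_le _ _).trans (Real.le_sqrt_of_sq_le sq_sum_le_card_mul_sum_sq)

section DerShap

open scoped Matrix.Norms.Frobenius

variable {ι n : Type*} [Fintype n]

/-- The vector `(A e + diag A) / 2` of derivative-based Shapley values of a matrix `A`. It is a
linear map into Euclidean space, so that a truncation error is the image of the discarded part. -/
noncomputable def derShap : Matrix n n ℝ →ₗ[ℝ] EuclideanSpace ℝ n where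
  toFun A := WithLp.toLp 2 fun j => (1 / 2) * ∑ l, A j l + (1 / 2) * A j j
  map_add' A B := by
    ext j
    simp only [Matrix.add_apply, sum_add_distrib, PiLp.add_apply]
    ring
  map_smul' c A := by
    ext j
    simp only [Matrix.smul_apply, smul_eq_mul, ← mul_sum, PiLp.smul_apply, RingHom.id_apply]
    ring

theorem derShap_apply (A : Matrix n n ℝ) (j : n) :
    derShap A j = (1 / 2) * ∑ l, A j l + (1 / 2) * A j j := rfl

theorem abs_derShap_apply_le (A : Matrix n n ℝ) (j : n) :
    |derShap A j| ≤ √(Fintype.card n) * ‖WithLp.toLp 2 (A j)‖ := by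
  have : Nonempty n := ⟨j⟩
  set r : EuclideanSpace ℝ n := WithLp.toLp 2 (A j)
  have row_sum : |∑ l, r l| ≤ √(Fintype.card n) * ‖r‖ := norm_sum_apply_le_sqrt_card_mul_norm r
  have diag_entry : |r j| ≤ √(Fintype.card n) * ‖r‖ :=
    (PiLp.norm_apply_le r j).trans <| le_mul_of_one_le_left (norm_nonneg r) <|
      Real.one_le_sqrt.2 (Nat.one_le_cast.2 Fintype.card_pos)
  calc |derShap A j| ≤ (1 / 2) * |∑ l, r l| + (1 / 2) * |r j| := by
        simpa [derShap_apply, abs_mul, r] using abs_add_le ((1 / 2) * ∑ l, r l) ((1 / 2) * r j)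
    _ ≤ √(Fintype.card n) * ‖r‖ := by linarith

theorem norm_derShap_le (A : Matrix n n ℝ) : ‖derShap A‖ ≤ √(Fintype.card n) * ‖A‖ := by
  refine le_of_sq_le_sq ?_ (by positivity)
  calc ‖derShap A‖ ^ 2 = ∑ j, |derShap A j| ^ 2 := EuclideanSpace.norm_sq_eq _
    _ ≤ ∑ j, (√(Fintype.card n) * ‖WithLp.toLp 2 (A j)‖) ^ 2 := by
      gcongr with j
      exact abs_derShap_apply_le A j
    _ = (√(Fintype.card n) * ‖A‖) ^ 2 := by
      simp only [mul_pow, ← mul_sum, frobenius_norm_sq_eq_sum_norm_row_sq]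

theorem dershap_truncation_error_bound_general [Fintype ι]
    (w : ι → EuclideanSpace ℝ n) (lam : ι → ℝ) (ε : ℝ) (S : Finset ι)
    (hw : ∀ i ∉ S, ‖w i‖ ≤ 1) (hlam : ∀ i ∉ S, |lam i| ≤ ε) :
    ‖derShap (∑ i, lam i • Matrix.vecMulVec (w i).ofLp (w i).ofLp)
        - derShap (∑ i ∈ S, lam i • Matrix.vecMulVec (w i).ofLp (w i).ofLp)‖
      ≤ (Fintype.card ι - #S) * ε * √(Fintype.card n) := by
  classical
  rw [← map_sub, ← sum_compl_add_sum S, add_sub_cancel_right]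
  have discarded_le : ∀ i ∈ Sᶜ, ‖lam i‖ * (‖w i‖ * ‖w i‖) ≤ ε := fun i hi =>
    have hi : i ∉ S := mem_compl.1 hi
    calc ‖lam i‖ * (‖w i‖ * ‖w i‖) ≤ ‖lam i‖ :=
          mul_le_of_le_one_right (norm_nonneg _) (mul_le_one₀ (hw i hi) (norm_nonneg _) (hw i hi))
      _ ≤ ε := hlam i hi
  calc ‖derShap (∑ i ∈ Sᶜ, lam i • Matrix.vecMulVec (w i).ofLp (w i).ofLp)‖
      ≤ √(Fintype.card n) * ∑ i ∈ Sᶜ, ‖lam i‖ * (‖w i‖ * ‖w i‖) := by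
        grw [norm_derShap_le, frobenius_norm_sum_smul_vecMulVec_le]
    _ ≤ √(Fintype.card n) * (#Sᶜ • ε) := by
        gcongr
        exact sum_le_card_nsmul _ _ _ discarded_le
    _ = (Fintype.card ι - #S) * ε * √(Fintype.card n) := by
        rw [card_compl, nsmul_eq_mul, Nat.cast_sub S.card_le_univ, mul_comm]

end DerShap

/-- Error bound between the vector of derivative-based Shapley values `Φ` computed from
`M = ∑_i λ_i wᵢ wᵢᵀ` and the approximate values `Φ̃` computed from the truncation
`M̃ = ∑_{i∈S} λ_i wᵢ wᵢᵀ`: `‖Φ - Φ̃‖₂ ≤ (d - k) ε √d`. -/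
theorem dershap_truncation_error_bound
    (d : ℕ) (hd : 1 ≤ d)
    (w : Fin d → Fin d → ℝ)
    (hw : ∀ i j : Fin d, ∑ p, w i p * w j p = if i = j then 1 else 0)
    (lam : Fin d → ℝ) (hlam : ∀ i, 0 ≤ lam i)
    (ε : ℝ) (hε : 0 ≤ ε)
    (S : Finset (Fin d)) (k : ℕ) (hk : S.card = k)
    (hsmall : ∀ i, i ∉ S → lam i ≤ ε)
    (M Mt : Matrix (Fin d) (Fin d) ℝ)
    (hM : ∀ j l : Fin d, M j l = ∑ i : Fin d, lam i * (w i j * w i l))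
    (hMt : ∀ j l : Fin d, Mt j l = ∑ i ∈ S, lam i * (w i j * w i l))
    (Φ Φt : Fin d → ℝ)
    (hΦ : ∀ j : Fin d, Φ j = (1 / 2) * (∑ l : Fin d, M j l) + (1 / 2) * M j j)
    (hΦt : ∀ j : Fin d, Φt j = (1 / 2) * (∑ l : Fin d, Mt j l) + (1 / 2) * Mt j j) :
    Real.sqrt (∑ j : Fin d, (Φ j - Φt j) ^ 2) ≤ ((d : ℝ) - k) * ε * Real.sqrt d := by
  have error_bound := dershap_truncation_error_bound_general (fun i => WithLp.toLp 2 (w i)) lam ε S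
    (fun i _ => by simp [EuclideanSpace.norm_eq, sq, hw])
    (fun i hi => (abs_of_nonneg (hlam i)).trans_le (hsmall i hi))
  simpa only [EuclideanSpace.norm_eq, Real.norm_eq_abs, sq_abs, PiLp.sub_apply, derShap_apply,
    Matrix.sum_apply, Matrix.smul_apply, Matrix.vecMulVec_apply, smul_eq_mul, Fintype.card_fin,
    hΦ, hΦt, hM, hMt, hk] using error_bound
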